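/- arXiv:2207.11744 — 2 statements merged into one kernel-verified Lean document; each statement's English description precedes it below -/
import Mathlib

section
/- Let q = r^2 with r an odd prime power. Suppose q − 1 = e_1 f_1 = e_2 f_2, there exists an integer l ≥ 2 with e_1 ≡ 2^l (mod 2^{l+1}) and 2^l | e_2, and that 2e_2 | e_1(r+1) and e_1 | e_2(r−1). Let s, t be integers with 1 ≤ s ≤ D_1 and 1 ≤ t ≤ D_2, and set n_1 = s·f_1 + t·f_2. If the integer t·e_1(r+1)/(2e_2) is even, (r+1)/2 is even, and n_1 is even, then there exists an MDS almost self-dual code over F_q of length n_1 + 1, i.e., a linear code C ⊆ F_q^{n_1+1} with dim C = n_1/2, C ⊆ C⊥, dim C⊥ = dim C + 1, and minimum Hamming distance n_1/2 + 2. -/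
/-- The Euclidean dual of a linear code `C ⊆ F^n`. -/
def dualCode {F : Type*} [Field F] {n : ℕ} (C : Submodule F (Fin n → F)) :
    Submodule F (Fin n → F) where
  carrier := {x | ∀ c ∈ C, ∑ i, x i * c i = 0}
  add_mem' := by
    intro a b ha hb c hc
    simp only [Set.mem_setOf_eq] at ha hb ⊢
    simp [Pi.add_apply, add_mul, Finset.sum_add_distrib, ha c hc, hb c hc]
  zero_mem' := by intro c hc; simp
  smul_mem' := by
    intro r a ha c hc
    simp only [Set.mem_setOf_eq] at ha ⊢
    simp [Pi.smul_apply, smul_eq_mul, mul_assoc, ← Finset.mul_sum, ha c hc]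

/-- `C` has minimum Hamming distance `d`. -/
def IsMinDist {F : Type*} [Field F] [DecidableEq F] {n : ℕ}
    (C : Submodule F (Fin n → F)) (d : ℕ) : Prop :=
  (∀ c ∈ C, c ≠ 0 → d ≤ hammingNorm c) ∧ ∃ c ∈ C, c ≠ 0 ∧ hammingNorm c = d

open Polynomial

lemma finrank_dualCode {F : Type*} [Field F] {n : ℕ} (C : Submodule F (Fin n → F)) :
    Module.finrank F (dualCode C) = n - Module.finrank F C := by
  have hnd : (Matrix.toBilin' (1 : Matrix (Fin n) (Fin n) F)).Nondegenerate :=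
    LinearMap.BilinForm.nondegenerate_toBilin'_of_det_ne_zero' _ (by simp)
  have := LinearMap.BilinForm.finrank_orthogonal hnd C
  rw [Module.finrank_fin_fun] at this
  rw [← this]
  have : dualCode C = LinearMap.BilinForm.orthogonal (Matrix.toBilin' (1 : Matrix (Fin n) (Fin n) F)) C := by
    ext x
    simp [dualCode, LinearMap.BilinForm.mem_orthogonal_iff, Matrix.toBilin'_apply', dotProduct, mul_comm]
  rw [this]

noncomputable def grsMap {F : Type*} [Field F] {n : ℕ} (a v : Fin n → F) : F[X] →ₗ[F] (Fin n → F) where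
  toFun p := fun i => v i * p.eval (a i)
  map_add' p q := by ext i; simp [mul_add]
  map_smul' c p := by ext i; simp; ring

lemma grs_norm {F : Type*} [Field F] [DecidableEq F] {n : ℕ} (a v : Fin n → F) (ha : Function.Injective a)
    (hv : ∀ i, v i ≠ 0) (p : F[X]) (hp : p ≠ 0) : n ≤ hammingNorm (grsMap a v p) + p.natDegree := by
  have h1 : hammingNorm (grsMap a v p) = (Finset.univ.filter (fun i => p.eval (a i) ≠ 0)).card := by
    simp [hammingNorm, grsMap, hv]
  have h2 : (Finset.univ.filter (fun i => p.eval (a i) = 0)).card ≤ p.natDegree := by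
    rw [← Finset.card_image_of_injective _ ha]
    refine le_trans (Finset.card_le_card ?_) (p.roots.toFinset_card_le.trans p.card_roots')
    intro x hx
    simp only [Finset.mem_image, Finset.mem_filter, Finset.mem_univ, true_and] at hx
    obtain ⟨i, hi, rfl⟩ := hx
    simp [hp, hi]
  have h3 := Finset.card_filter_add_card_filter_not (s := (Finset.univ : Finset (Fin n))) (fun i => p.eval (a i) = 0)
  simp only [Finset.card_univ, Fintype.card_fin] at h3
  rw [h1]; simp only [ne_eq]; omega

lemma grs_code {F : Type*} [Field F] [DecidableEq F] (k m : ℕ) (hk : 1 ≤ k) (hm : m = 2 * k)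
    (a v : Fin (m + 1) → F) (ha : Function.Injective a)
    (hv : ∀ i, v i * v i * (∏ j ∈ Finset.univ.erase i, (a i - a j)) = 1) :
    ∃ C : Submodule F (Fin (m + 1) → F),
      Module.finrank F C = k ∧
      C ≤ dualCode C ∧
      Module.finrank F (dualCode C) = Module.finrank F C + 1 ∧
      IsMinDist C (k + 2) := by
  have hv0 : ∀ i, v i ≠ 0 := by
    intro i h; have := hv i; simp [h] at this
  have hinj : ∀ p ∈ degreeLT F k, grsMap a v p = 0 → p = 0 := by
    intro p hp h0
    by_contra hne
    have := grs_norm a v ha hv0 p hne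
    rw [h0, hammingNorm_zero] at this
    have := (natDegree_lt_iff_degree_lt hne).2 (mem_degreeLT.1 hp)
    omega
  have hdim : Module.finrank F ((degreeLT F k).map (grsMap a v)) = k := by
    have hi : Function.Injective ((grsMap a v).domRestrict (degreeLT F k)) := by
      rw [← LinearMap.ker_eq_bot, LinearMap.ker_eq_bot']
      rintro ⟨p, hp⟩ h
      exact Subtype.ext (hinj p hp h)
    rw [← LinearMap.range_domRestrict, LinearMap.finrank_range_of_inj hi,
      (degreeLTEquiv F k).finrank_eq, Module.finrank_fin_fun]
  refine ⟨(degreeLT F k).map (grsMap a v), hdim, ?_, ?_, ?_, ?_⟩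
  · rintro _ ⟨p, hp, rfl⟩ _ ⟨q, hq, rfl⟩
    have hp' := mem_degreeLT.1 hp
    have hq' := mem_degreeLT.1 hq
    have hd : (p * q).degree < (2 * k - 1 : ℕ) := by
      by_cases hp0 : p = 0
      · simp [hp0]
      by_cases hq0 : q = 0
      · simp [hq0]
      rw [← natDegree_lt_iff_degree_lt hp0] at hp'
      rw [← natDegree_lt_iff_degree_lt hq0] at hq'
      rw [← natDegree_lt_iff_degree_lt (mul_ne_zero hp0 hq0), natDegree_mul hp0 hq0]
      omega
    have h := Lagrange.coeff_eq_sum (s := Finset.univ) (v := a) ha.injOn (P := p * q)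
      (hd.trans (by simp; exact_mod_cast (by omega)))
    rw [coeff_eq_zero_of_degree_lt (hd.trans_le (by simp; exact_mod_cast (by omega)))] at h
    rw [h]
    refine Finset.sum_congr rfl fun i _ => ?_
    have h1 := hv i
    have h2 : (∏ j ∈ Finset.univ.erase i, (a i - a j)) ≠ 0 := right_ne_zero_of_mul_eq_one h1
    rw [eq_div_iff h2]
    simp only [grsMap, LinearMap.coe_mk, AddHom.coe_mk, eval_mul]
    linear_combination (eval (a i) p * eval (a i) q) * h1
  · rw [finrank_dualCode, hdim]; omega
  · rintro _ ⟨p, hp, rfl⟩ h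
    have hne : p ≠ 0 := by rintro rfl; simp at h
    have := grs_norm a v ha hv0 p hne
    have := (natDegree_lt_iff_degree_lt hne).2 (mem_degreeLT.1 hp)
    omega
  · obtain ⟨T, -, hT⟩ := Finset.exists_subset_card_eq (s := (Finset.univ : Finset (Fin (m+1)))) (n := k - 1) (by simp; omega)
    have hmem : Lagrange.nodal T a ∈ degreeLT F k := by
      rw [mem_degreeLT, Lagrange.degree_nodal, hT]; exact_mod_cast (by omega)
    refine ⟨_, ⟨Lagrange.nodal T a, hmem, rfl⟩, ?_, ?_⟩
    · intro h; exact Lagrange.nodal_ne_zero (hinj _ hmem h)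
    · have : hammingNorm (grsMap a v (Lagrange.nodal T a)) = (Tᶜ).card := by
        unfold hammingNorm
        congr 1
        ext i
        simp [grsMap, hv0, Lagrange.eval_nodal, Finset.prod_eq_zero_iff, sub_eq_zero, ha.eq_iff]
      rw [this, Finset.card_compl, hT]; simp; omega

lemma grs_poly {F : Type*} [Field F] [DecidableEq F] (k m : ℕ) (hk : 1 ≤ k) (hm : m = 2 * k)
    (P : F[X]) (hP : P.Monic) (hs : P.Splits) (hd : P.natDegree = m + 1)
    (h : ∀ a, P.eval a = 0 → P.derivative.eval a ≠ 0 ∧ IsSquare (P.derivative.eval a)) :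
    ∃ C : Submodule F (Fin (m + 1) → F),
      Module.finrank F C = k ∧
      C ≤ dualCode C ∧
      Module.finrank F (dualCode C) = Module.finrank F C + 1 ∧
      IsMinDist C (k + 2) := by
  have hnd : P.roots.Nodup := by
    rw [Multiset.nodup_iff_count_le_one]
    intro a
    rw [count_roots]
    by_contra hc
    push Not at hc
    rw [one_lt_rootMultiplicity_iff_isRoot hP.ne_zero] at hc
    exact (h a hc.1).1 hc.2
  have hcard : Fintype.card P.roots.toFinset = m + 1 := by
    rw [Fintype.card_coe, Multiset.toFinset_card_of_nodup hnd, splits_iff_card_roots.1 hs, hd]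
  let e := (Fintype.equivFinOfCardEq hcard).symm
  let a : Fin (m + 1) → F := fun i => (e i : F)
  have ha : Function.Injective a := Subtype.val_injective.comp e.injective
  have hPn : P = Lagrange.nodal Finset.univ a := by
    conv_lhs => rw [hs.eq_prod_roots_of_monic hP]
    rw [Lagrange.nodal_eq]
    have : P.roots = (Finset.univ : Finset (Fin (m+1))).val.map a := by
      have h1 : Finset.univ.image a = P.roots.toFinset := by
        ext x
        simp only [Finset.mem_image, Finset.mem_univ, true_and]
        constructor
        · rintro ⟨i, rfl⟩; exact (e i).2
        · intro hx; exact ⟨e.symm ⟨x, hx⟩, by simp [a]⟩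
      rw [← Finset.image_val_of_injOn ha.injOn, h1, Multiset.toFinset_val, hnd.dedup]
    rw [this, Multiset.map_map]; rfl
  have hder : ∀ i, P.derivative.eval (a i) = ∏ j ∈ Finset.univ.erase i, (a i - a j) := by
    intro i
    rw [hPn, Lagrange.eval_nodal_derivative_eval_node_eq (Finset.mem_univ i), Lagrange.eval_nodal]
  have hroot : ∀ i, P.eval (a i) = 0 := by
    intro i; rw [hPn]; exact Lagrange.eval_nodal_at_node (Finset.mem_univ i)
  choose h1 h2 using fun i => h (a i) (hroot i)
  choose w hw using h2
  refine grs_code k m hk hm a (fun i => (w i)⁻¹) ha fun i => ?_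
  rw [← hder, hw]
  have : w i ≠ 0 := by intro h0; apply h1 i; rw [hw, h0]; simp
  field_simp

lemma exists_frob {F : Type*} [Field F] [Fintype F] (r : ℕ) (hr : IsPrimePow r)
    (hF : Fintype.card F = r ^ 2) : ∃ φ : F →+* F, ∀ x, φ x = x ^ r := by
  obtain ⟨p, m, hp, hm, rfl⟩ := hr
  have hp' : p.Prime := hp.nat_prime
  haveI : Fact p.Prime := ⟨hp'⟩
  haveI : CharP F p := charP_of_card_eq_prime_pow (f := m * 2) (by rw [hF, pow_mul])
  exact ⟨iterateFrobenius F p m, fun x => iterateFrobenius_def p m x⟩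

lemma comp_pow_eq {F : Type*} [Field F] (B : Finset F) (f : ℕ) :
    (Lagrange.nodal B id).comp (X ^ f) = ∏ b ∈ B, (X ^ f - C b : F[X]) := by
  simp [Lagrange.nodal_eq, prod_comp]

lemma key_deriv {F : Type*} [Field F] [DecidableEq F] (B : Finset F) (f : ℕ) (hf : f ≠ 0) (a : F)
    (ha : a ^ f ∈ B) :
    a * eval a (derivative ((Lagrange.nodal B id).comp (X ^ f))) =
      (f : F) * a ^ f * ∏ b ∈ B.erase (a ^ f), (a ^ f - b) := by
  have h := Lagrange.eval_nodal_derivative_eval_node_eq (v := (id : F → F)) ha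
  simp only [id] at h
  rw [derivative_comp, eval_mul, eval_comp]
  simp only [eval_pow, eval_X, derivative_X_pow, eval_mul, eval_C]
  rw [h, Lagrange.eval_nodal]
  obtain ⟨f', rfl⟩ := Nat.exists_eq_succ_of_ne_zero hf
  simp only [Nat.succ_eq_add_one, Nat.add_sub_cancel, id, eval_natCast, pow_succ]
  ring

lemma diff_pow {F : Type*} [Field F] (r R : ℕ) (hR : r + 1 = 2 * R) (hRe : Even R)
    (φ : F →+* F) (hφ : ∀ x, φ x = x ^ r) (u w : F) (hne : u ≠ w) (hu : u ^ (r + 1) = 1)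
    (hw : w ^ (r + 1) = 1) (hr : 1 ≤ r) :
    (u - w) ^ ((r - 1) * R) * (u ^ R * w ^ R) = 1 := by
  have h0 : u - w ≠ 0 := sub_ne_zero.2 hne
  have h1 : (u - w) ^ r = u ^ r - w ^ r := by rw [← hφ, map_sub, hφ, hφ]
  have h2 : (u - w) ^ (r - 1) * (u * w) = -1 := by
    apply mul_right_cancel₀ h0
    have h3 : (u - w) ^ r = (u - w) ^ (r - 1) * (u - w) := by
      rw [← pow_succ, Nat.sub_add_cancel hr]
    rw [pow_succ] at hu hw
    linear_combination (u * w) * (-h3 + h1) + w * hu - u * hw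
  rw [pow_mul, ← mul_pow, ← mul_pow, h2, hRe.neg_one_pow]

/-- Theorem 5.2(2): if `t·e₁(r+1)/(2e₂)`, `(r+1)/2` and `n₁ = s·f₁ + t·f₂` are all even,
there is a `q`-ary MDS almost self-dual code of length `n₁ + 1`, where `q = r²`. -/
theorem mds_almost_self_dual_thm5_even_length_succ
    (r e1 f1 e2 f2 s t l : ℕ)
    (hr_odd : Odd r) (hr_pp : IsPrimePow r)
    (hq1 : r ^ 2 - 1 = e1 * f1) (hq2 : r ^ 2 - 1 = e2 * f2)
    (hl : 2 ≤ l) (he1 : e1 % 2 ^ (l + 1) = 2 ^ l) (he2 : 2 ^ l ∣ e2)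
    (hdvd1 : 2 * e2 ∣ e1 * (r + 1)) (hdvd2 : e1 ∣ e2 * (r - 1))
    (hs1 : 1 ≤ s) (hs2 : s ≤ e1 / Nat.gcd e1 e2)
    (ht1 : 1 ≤ t) (ht2 : t ≤ e2 / Nat.gcd e1 e2)
    (heven1 : Even (t * e1 * (r + 1) / (2 * e2)))
    (heven2 : Even ((r + 1) / 2))
    (hn1 : Even (s * f1 + t * f2))
    (F : Type*) [Field F] [Fintype F] [DecidableEq F]
    (hF : Fintype.card F = r ^ 2) :
    ∃ C : Submodule F (Fin (s * f1 + t * f2 + 1) → F),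
      Module.finrank F C = (s * f1 + t * f2) / 2 ∧
      C ≤ dualCode C ∧
      Module.finrank F (dualCode C) = Module.finrank F C + 1 ∧
      IsMinDist C ((s * f1 + t * f2) / 2 + 2) := by
  obtain ⟨φ, hφ⟩ := exists_frob r hr_pp hF
  have hr1 : 1 < r := hr_pp.one_lt
  obtain ⟨R, hR⟩ : ∃ R, r + 1 = 2 * R := by
    obtain ⟨k, hk⟩ := hr_odd; exact ⟨k + 1, by omega⟩
  have hRe : Even R := by
    have : (r + 1) / 2 = R := by omega
    rwa [this] at heven2
  have hN : r ^ 2 - 1 = (r - 1) * (2 * R) := by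
    rw [← hR]; obtain ⟨r', rfl⟩ : ∃ r', r = r' + 1 := ⟨r - 1, by omega⟩
    rw [Nat.add_sub_cancel, Nat.sub_eq_iff_eq_add (by nlinarith)]; ring
  have hNpos : 0 < r ^ 2 - 1 := by rw [hN]; apply Nat.mul_pos <;> omega
  set N := r ^ 2 - 1 with hNdef
  have he1pos : 0 < e1 := Nat.pos_of_ne_zero (by rintro rfl; simp at hq1; omega)
  have he2pos : 0 < e2 := Nat.pos_of_ne_zero (by rintro rfl; simp at hq2; omega)
  have hf1pos : 0 < f1 := Nat.pos_of_ne_zero (by rintro rfl; simp at hq1; omega)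
  have hf2pos : 0 < f2 := Nat.pos_of_ne_zero (by rintro rfl; simp at hq2; omega)
  -- arithmetic
  obtain ⟨K, hK⟩ := hdvd1
  obtain ⟨L, hL⟩ := hdvd2
  have hK1 : e1 * R = e2 * K := by rw [hR] at hK; linarith
  have hK2 : f2 * R = f1 * K := by
    apply Nat.eq_of_mul_eq_mul_left he1pos
    calc e1 * (f2 * R) = f2 * (e1 * R) := by ring
      _ = (e2 * f2) * K := by rw [hK1]; ring
      _ = e1 * (f1 * K) := by rw [← hq2, hq1]; ring
  have hL2 : f1 * (r - 1) = f2 * L := by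
    apply Nat.eq_of_mul_eq_mul_left he2pos
    calc e2 * (f1 * (r - 1)) = f1 * (e2 * (r - 1)) := by ring
      _ = (e1 * f1) * L := by rw [hL]; ring
      _ = e2 * (f2 * L) := by rw [← hq1, hq2]; ring
  have hKt : Even (K * t) := by
    have : t * e1 * (r + 1) / (2 * e2) = K * t := by
      rw [mul_assoc, hK]
      apply Nat.div_eq_of_eq_mul_right (by omega); ring
    rwa [this] at heven1
  obtain ⟨o, ho, hoo⟩ : ∃ o, e1 = 2 ^ l * o ∧ Odd o := by
    have := Nat.div_add_mod e1 (2 ^ (l + 1))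
    rw [he1] at this
    exact ⟨2 * (e1 / 2 ^ (l + 1)) + 1, by rw [pow_succ] at this ⊢; linarith, ⟨_, rfl⟩⟩
  obtain ⟨m, hm⟩ := he2
  obtain ⟨c, hc⟩ : ∃ c, e1 = 2 * c := by
    refine ⟨2 ^ (l - 1) * o, ?_⟩
    rw [← mul_assoc, ← pow_succ', Nat.sub_add_cancel (by omega), ho]
  have hcN : f1 * c = (r - 1) * R := by
    have : 2 * (f1 * c) = 2 * ((r - 1) * R) := by
      calc 2 * (f1 * c) = e1 * f1 := by rw [hc]; ring
        _ = _ := by rw [← hq1, hN]; ring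
    omega
  have hom : f1 * o = f2 * m := by
    apply Nat.eq_of_mul_eq_mul_left (Nat.two_pow_pos l)
    calc 2 ^ l * (f1 * o) = e1 * f1 := by rw [ho]; ring
      _ = e2 * f2 := by rw [← hq1, hq2]
      _ = _ := by rw [hm]; ring
  have hre : Even (r - 1) := by obtain ⟨k, rfl⟩ := hr_odd; exact ⟨k, by omega⟩
  set H := (r - 1) * R with hH
  have hHe : Even H := hre.mul_right R
  have hHpos : 0 < H := by apply Nat.mul_pos <;> omega
  have hNH : N = 2 * H := by rw [hN, hH]; ring
  -- characteristic
  have hchar : ringChar F ≠ 2 := by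
    intro h2
    have h2' := FiniteField.even_card_of_char_two h2
    rw [hF] at h2'
    have := hr_odd.pow (n := 2)
    rw [Nat.odd_iff] at this; omega
  have hm1 : (-1 : F) ≠ 1 := Ring.neg_one_ne_one_of_char_ne_two hchar
  have hsq : ∀ x : F, x ^ H = 1 → x ≠ 0 ∧ IsSquare x := by
    intro x hx
    have hx0 : x ≠ 0 := by rintro rfl; rw [zero_pow hHpos.ne'] at hx; exact zero_ne_one hx
    refine ⟨hx0, (FiniteField.isSquare_iff hchar hx0).2 ?_⟩
    have : Fintype.card F / 2 = H := by rw [hF]; omega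
    rw [this, hx]
  have hfix : ∀ x : F, x ≠ 0 → x ^ r = x → x ^ H = 1 := by
    intro x hx0 hx
    have : x ^ (r - 1) = 1 := by
      apply mul_right_cancel₀ hx0
      rw [← pow_succ, Nat.sub_add_cancel hr1.le, hx, one_mul]
    rw [hH, pow_mul, this, one_pow]
  have hfix' : ∀ x : F, x ^ (r - 1) = 1 → x ^ r = x := by
    intro x hx
    rw [← Nat.sub_add_cancel hr1.le, pow_succ, hx, one_mul]
  have hfixsub : ∀ x y : F, x ≠ y → x ^ r = x → y ^ r = y → (x - y) ^ H = 1 := by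
    intro x y hne hx hy
    exact hfix _ (sub_ne_zero.2 hne) (by rw [← hφ, map_sub, hφ, hφ, hx, hy])
  have hrF : (r : F) = 0 := by
    have : ((r : F)) ^ 2 = 0 := by
      have := FiniteField.cast_card_eq_zero F
      rw [hF] at this; exact_mod_cast this
    exact pow_eq_zero_iff (by norm_num) |>.1 this
  have hNF : (N : F) ≠ 0 := by
    have : ((N + 1 : ℕ) : F) = 0 := by
      have : N + 1 = r ^ 2 := by omega
      rw [this]; simp [hrF]
    intro h
    simp [h] at this
  have hnat : ∀ f : ℕ, f ∣ N → (f : F) ^ H = 1 := by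
    rintro f ⟨d, hd⟩
    apply hfix
    · intro h; apply hNF; rw [hd]; simp [h]
    · rw [← hφ, map_natCast]
  -- primitive root
  obtain ⟨θ, hθ⟩ : ∃ θ : F, IsPrimitiveRoot θ N := by
    obtain ⟨g, hg⟩ := IsCyclic.exists_generator (α := Fˣ)
    refine ⟨(g : F), ?_⟩
    have : orderOf (g : F) = N := by
      rw [orderOf_units, orderOf_eq_card_of_forall_mem_zpowers hg, Nat.card_eq_fintype_card,
        Fintype.card_units, hF]
    rw [← this]; exact IsPrimitiveRoot.orderOf _
  have hθN : ∀ n, θ ^ (N * n) = 1 := fun n => by rw [pow_mul, hθ.pow_eq_one, one_pow]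
  have hθH : θ ^ H = -1 := by
    have h1 : θ ^ H * θ ^ H = 1 := by rw [← pow_add, ← two_mul, ← hNH, hθ.pow_eq_one]
    rcases mul_self_eq_one_iff.1 h1 with h | h
    · have := Nat.le_of_dvd hHpos (hθ.dvd_of_pow_eq_one _ h); omega
    · exact h
  have hθ0 : θ ≠ 0 := hθ.ne_zero hNpos.ne'
  set B1 : Finset F := (Finset.range s).image (fun i => θ ^ (e2 * f1 * i)) with hB1
  set B2 : Finset F := (Finset.range t).image (fun j => θ ^ (f2 * c * (1 + 2 * j))) with hB2
  have hcard1 : B1.card = s := by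
    rw [hB1, Finset.card_image_of_injOn, Finset.card_range]
    intro i hi j hj hij
    simp only [pow_mul θ (e2 * f1)] at hij
    have ho : orderOf (θ ^ (e2 * f1)) = e1 / e1.gcd e2 := by
      rw [orderOf_pow' _ (Nat.mul_pos he2pos hf1pos).ne', ← hθ.eq_orderOf, hq1, Nat.gcd_mul_right, Nat.mul_div_mul_right _ _ hf1pos]
    refine pow_injOn_Iio_orderOf (x := θ ^ (e2 * f1)) ?_ ?_ hij <;> rw [ho] <;> simp at hi hj ⊢ <;> omega
  have hcard2 : B2.card = t := by
    rw [hB2, Finset.card_image_of_injOn, Finset.card_range]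
    intro i hi j hj hij
    have hij' : (θ ^ (e1 * f2)) ^ i = (θ ^ (e1 * f2)) ^ j := by
      apply mul_left_cancel₀ (pow_ne_zero (f2 * c) hθ0)
      rw [← pow_mul, ← pow_mul, ← pow_add, ← pow_add]
      convert hij using 2 <;> rw [hc] <;> ring
    have ho : orderOf (θ ^ (e1 * f2)) = e2 / e1.gcd e2 := by
      rw [orderOf_pow' _ (Nat.mul_pos he1pos hf2pos).ne', ← hθ.eq_orderOf, hq2, Nat.gcd_mul_right, Nat.mul_div_mul_right _ _ hf2pos,
        Nat.gcd_comm]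
    refine pow_injOn_Iio_orderOf (x := θ ^ (e1 * f2)) ?_ ?_ hij' <;> rw [ho] <;> simp at hi hj ⊢ <;> omega
  have hb1 : ∀ b ∈ B1, b ≠ 0 ∧ b ^ (r - 1) = 1 ∧ b ^ K = 1 ∧ b ^ o = 1 := by
    intro b hb
    obtain ⟨i, -, rfl⟩ := Finset.mem_image.1 hb
    refine ⟨pow_ne_zero _ hθ0, ?_, ?_, ?_⟩ <;> rw [← pow_mul]
    · rw [← hθN (L * i)]; congr 1
      calc e2 * f1 * i * (r - 1) = e2 * i * (f1 * (r - 1)) := by ring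
        _ = (e2 * f2) * (L * i) := by rw [hL2]; ring
        _ = _ := by rw [← hq2]
    · rw [← hθN (R * i)]; congr 1
      calc e2 * f1 * i * K = e2 * i * (f1 * K) := by ring
        _ = (e2 * f2) * (R * i) := by rw [← hK2]; ring
        _ = _ := by rw [← hq2]
    · rw [← hθN (m * i)]; congr 1
      calc e2 * f1 * i * o = e2 * i * (f1 * o) := by ring
        _ = (e2 * f2) * (m * i) := by rw [hom]; ring
        _ = _ := by rw [← hq2]
  have hb2 : ∀ b ∈ B2, b ≠ 0 ∧ b ^ R = (-1) ^ K ∧ b ^ L = 1 ∧ b ^ m = -1 := by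
    intro b hb
    obtain ⟨j, -, rfl⟩ := Finset.mem_image.1 hb
    have hodd : Odd (1 + 2 * j) := ⟨j, by ring⟩
    refine ⟨pow_ne_zero _ hθ0, ?_, ?_, ?_⟩ <;> rw [← pow_mul]
    · have : f2 * c * (1 + 2 * j) * R = H * (1 + 2 * j) * K := by
        calc _ = (f2 * R) * (c * (1 + 2 * j)) := by ring
          _ = (f1 * c) * (1 + 2 * j) * K := by rw [hK2]; ring
          _ = _ := by rw [hcN]
      rw [this, pow_mul, pow_mul, hθH, hodd.neg_one_pow]
    · have : f2 * c * (1 + 2 * j) * L = H * ((1 + 2 * j) * (r - 1)) := by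
        calc _ = (f2 * L) * (c * (1 + 2 * j)) := by ring
          _ = (f1 * c) * ((1 + 2 * j) * (r - 1)) := by rw [← hL2]; ring
          _ = _ := by rw [hcN]
      rw [this, pow_mul, hθH, (hre.mul_left _).neg_one_pow]
    · have : f2 * c * (1 + 2 * j) * m = H * ((1 + 2 * j) * o) := by
        calc _ = (f2 * m) * (c * (1 + 2 * j)) := by ring
          _ = (f1 * c) * ((1 + 2 * j) * o) := by rw [← hom]; ring
          _ = _ := by rw [hcN]
      rw [this, pow_mul, hθH, (hodd.mul hoo).neg_one_pow]
  have hdisj : ∀ a : F, a ^ f1 ∈ B1 → a ^ f2 ∈ B2 → False := by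
    intro a h1 h2
    have h3 := (hb1 _ h1).2.2.2
    have h4 := (hb2 _ h2).2.2.2
    rw [← pow_mul] at h3 h4
    rw [hom, h4] at h3
    exact hm1 h3
  have hKK : ((-1 : F) ^ K) * (-1) ^ K = 1 := by rw [← mul_pow]; simp
  have hb1H : ∀ b ∈ B1, b ^ H = 1 := fun b hb => by
    rw [hH, pow_mul, (hb1 b hb).2.1, one_pow]
  have hb2H : ∀ b ∈ B2, b ^ H = 1 := fun b hb => by
    rw [hH, mul_comm, pow_mul, (hb2 b hb).2.1, ← pow_mul, (hre.mul_left K).neg_one_pow]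
  have hb2r : ∀ b ∈ B2, b ^ (r + 1) = 1 := fun b hb => by
    rw [hR, mul_comm, pow_mul, (hb2 b hb).2.1, ← pow_mul, (even_two.mul_left K).neg_one_pow]
  set P1 : F[X] := (Lagrange.nodal B1 id).comp (X ^ f1) with hP1
  set P2 : F[X] := (Lagrange.nodal B2 id).comp (X ^ f2) with hP2
  have hev1 : ∀ a, P1.eval a = ∏ b ∈ B1, (a ^ f1 - b) := by
    intro a; rw [hP1, comp_pow_eq]; simp [eval_prod]
  have hev2 : ∀ a, P2.eval a = ∏ b ∈ B2, (a ^ f2 - b) := by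
    intro a; rw [hP2, comp_pow_eq]; simp [eval_prod]
  have hM1 : P1.Monic := by
    rw [hP1, comp_pow_eq]; exact monic_prod_of_monic _ _ fun b _ => monic_X_pow_sub_C b hf1pos.ne'
  have hM2 : P2.Monic := by
    rw [hP2, comp_pow_eq]; exact monic_prod_of_monic _ _ fun b _ => monic_X_pow_sub_C b hf2pos.ne'
  have hd1 : P1.natDegree = s * f1 := by
    rw [hP1, natDegree_comp, Lagrange.natDegree_nodal, natDegree_X_pow, hcard1]
  have hd2 : P2.natDegree = t * f2 := by
    rw [hP2, natDegree_comp, Lagrange.natDegree_nodal, natDegree_X_pow, hcard2]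
  have hS1 : P1.Splits := by
    rw [hP1, comp_pow_eq]
    refine Splits.prod fun b hb => ?_
    obtain ⟨i, -, rfl⟩ := Finset.mem_image.1 hb
    exact X_pow_sub_C_splits_of_isPrimitiveRoot (hθ.pow hNpos hq1) (α := θ ^ (e2 * i)) (by rw [← pow_mul]; congr 1; ring)
  have hS2 : P2.Splits := by
    rw [hP2, comp_pow_eq]
    refine Splits.prod fun b hb => ?_
    obtain ⟨i, -, rfl⟩ := Finset.mem_image.1 hb
    exact X_pow_sub_C_splits_of_isPrimitiveRoot (hθ.pow hNpos hq2) (α := θ ^ (c * (1 + 2 * i))) (by rw [← pow_mul]; congr 1; ring)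
  have hsf : 0 < s * f1 := Nat.mul_pos hs1 hf1pos
  have htf : 0 < t * f2 := Nat.mul_pos ht1 hf2pos
  refine grs_poly ((s * f1 + t * f2) / 2) (s * f1 + t * f2) (by omega)
    (by obtain ⟨k, hk⟩ := hn1; omega) (X * (P1 * P2)) (monic_X.mul (hM1.mul hM2))
    (Splits.X.mul (hS1.mul hS2)) ?_ ?_
  · rw [monic_X.natDegree_mul (hM1.mul hM2), hM1.natDegree_mul hM2, hd1, hd2, natDegree_X]; ring
  intro a ha
  apply hsq
  have hder : eval a (derivative (X * (P1 * P2))) = eval a P1 * eval a P2 +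
      (a * eval a (derivative P1)) * eval a P2 + (a * eval a (derivative P2)) * eval a P1 := by
    simp [derivative_mul]; ring
  rw [hder]
  rw [eval_mul, eval_mul, eval_X, mul_eq_zero, mul_eq_zero] at ha
  rcases ha with rfl | ha | ha
  · simp only [zero_mul, add_zero]
    rw [hev1, hev2, mul_pow, ← Finset.prod_pow, ← Finset.prod_pow]
    rw [Finset.prod_eq_one, Finset.prod_eq_one, one_mul]
    · intro b hb; rw [zero_pow hf2pos.ne', zero_sub, hHe.neg_pow, hb2H b hb]
    · intro b hb; rw [zero_pow hf1pos.ne', zero_sub, hHe.neg_pow, hb1H b hb]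
  · have hmem : a ^ f1 ∈ B1 := by
      rw [hev1, Finset.prod_eq_zero_iff] at ha
      obtain ⟨b, hb, h⟩ := ha
      rwa [sub_eq_zero.1 h]
    rw [ha, zero_mul, zero_add, mul_zero, add_zero, hP1, key_deriv B1 f1 hf1pos.ne' a hmem, hev2]
    have hu : (a ^ f2) ^ R = 1 := by
      rw [← pow_mul, hK2, pow_mul, (hb1 _ hmem).2.2.1]
    rw [mul_pow, mul_pow, mul_pow, hnat f1 ⟨e1, by rw [hq1, mul_comm]⟩, hb1H _ hmem,
      ← Finset.prod_pow, ← Finset.prod_pow, Finset.prod_eq_one, Finset.prod_congr rfl (g := fun _ => (-1 : F) ^ K),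
      Finset.prod_const, hcard2, ← pow_mul, hKt.neg_one_pow]
    · simp
    · intro b hb
      have := diff_pow r R hR hRe φ hφ (a ^ f2) b (by rintro rfl; exact hdisj a hmem hb)
        (by rw [hR, mul_comm, pow_mul, hu, one_pow]) (hb2r b hb) hr1.le
      rw [hu, one_mul, (hb2 b hb).2.1] at this
      calc _ = (a ^ f2 - b) ^ H * ((-1) ^ K * (-1) ^ K) := by rw [hKK, mul_one]
        _ = _ := by rw [← mul_assoc, this, one_mul]
    · intro b hb
      rw [Finset.mem_erase] at hb
      exact hfixsub _ _ hb.1.symm (hfix' _ (hb1 _ hmem).2.1) (hfix' _ (hb1 _ hb.2).2.1)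
  · have hmem : a ^ f2 ∈ B2 := by
      rw [hev2, Finset.prod_eq_zero_iff] at ha
      obtain ⟨b, hb, h⟩ := ha
      rwa [sub_eq_zero.1 h]
    rw [ha, mul_zero, mul_zero, zero_add, zero_add, hP2, key_deriv B2 f2 hf2pos.ne' a hmem, hev1]
    have hu : (a ^ f1) ^ (r - 1) = 1 := by
      rw [← pow_mul, hL2, pow_mul, (hb2 _ hmem).2.2.1]
    rw [mul_pow, mul_pow, mul_pow, hnat f2 ⟨e2, by rw [hq2, mul_comm]⟩, hb2H _ hmem,
      ← Finset.prod_pow, ← Finset.prod_pow, Finset.prod_eq_one, Finset.prod_eq_one]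
    · simp
    · intro b hb
      exact hfixsub _ _ (by rintro rfl; exact hdisj a hb hmem) (hfix' _ hu) (hfix' _ (hb1 _ hb).2.1)
    · intro b hb
      rw [Finset.mem_erase] at hb
      have := diff_pow r R hR hRe φ hφ (a ^ f2) b hb.1.symm (hb2r _ hmem) (hb2r b hb.2) hr1.le
      rwa [(hb2 _ hmem).2.1, (hb2 b hb.2).2.1, hKK, mul_one] at this
end

section
/- Let q = r^2 with r an odd prime power. Suppose q − 1 = e_1 f_1 = e_2 f_2, there exists an integer l ≥ 2 with e_1 ≡ 2^l (mod 2^{l+1}) and 2^l | e_2, and that 2e_2 | e_1(r+1) and e_1 | e_2(r−1). Let s, t be integers with 1 ≤ s ≤ D_1 and 1 ≤ t ≤ D_2, and set n_1 = s·f_1 + t·f_2. If the integer t·e_1(r+1)/(2e_2) + t(r+1)/2 is even, (t−1)(r+1)/2 is even, and n_1 is odd, then for every integer k with 1 ≤ k ≤ (n_1+1)/2 − 1 there exists an [n_1+1, k] MDS self-orthogonal code over F_q, i.e., a linear code C ⊆ F_q^{n_1+1} with dim C = k, C ⊆ C⊥, and minimum Hamming distance (n_1+1) − k + 1. -/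
open Polynomial in
theorem aux_code {F : Type*} [Field F] [DecidableEq F] {n k : ℕ} (a : Fin n → F)
    (ha : Function.Injective a) (ha0 : ∀ i, a i ≠ 0) (hsq : ∀ i, IsSquare (a i))
    (hd : ∀ i, IsSquare (∏ j ∈ Finset.univ.erase i, (a i - a j)))
    (hm : IsSquare (-1 : F)) (hk : 1 ≤ k) (hkn : 2 * k ≤ n + 1) :
    ∃ C : Submodule F (Fin (n + 1) → F),
        Module.finrank F C = k ∧ C ≤ dualCode C ∧ IsMinDist C (n + 1 - k + 1) := by
  classical
  obtain ⟨w, hw⟩ := hm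
  have hw0 : w ≠ 0 := by rintro rfl; simp at hw
  have hP0 : ∀ i, ∏ j ∈ Finset.univ.erase i, (a i - a j) ≠ 0 := by
    intro i
    rw [Finset.prod_ne_zero_iff]
    intro j hj
    rw [sub_ne_zero]
    intro h
    exact (Finset.mem_erase.1 hj).1 (ha h).symm
  have hv : ∀ i, ∃ v : F, v * v = a i ^ (n + 1 - 2 * k) / ∏ j ∈ Finset.univ.erase i, (a i - a j) := by
    intro i
    obtain ⟨v, hv⟩ := ((hsq i).pow (n + 1 - 2 * k)).div (hd i)
    exact ⟨v, hv.symm⟩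
  choose v hv using hv
  have hv0 : ∀ i, v i ≠ 0 := by
    intro i h
    have := hv i
    rw [h, zero_mul] at this
    exact div_ne_zero (pow_ne_zero _ (ha0 i)) (hP0 i) this.symm
  let φ : F[X] →ₗ[F] (Fin (n + 1) → F) :=
    { toFun := fun p => Fin.snoc (α := fun _ => F) (fun i => v i * p.eval (a i)) (w * p.coeff (k - 1))
      map_add' := by
        intro p q
        ext i
        refine Fin.lastCases ?_ (fun i => ?_) i <;> simp [mul_add]
      map_smul' := by
        intro c p
        ext i
        refine Fin.lastCases ?_ (fun i => ?_) i <;> simp [mul_left_comm] }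
  have hφc : ∀ p i, φ p (Fin.castSucc i) = v i * p.eval (a i) := by
    intro p i; simp [φ]
  have hφl : ∀ p, φ p (Fin.last n) = w * p.coeff (k - 1) := by
    intro p; simp [φ]
  -- weight = n+1 - zeros
  have hwt : ∀ c : Fin (n+1) → F, hammingNorm c + (Finset.univ.filter (fun i => c i = 0)).card = n + 1 := by
    intro c
    have := Finset.card_filter_add_card_filter_not (s := (Finset.univ : Finset (Fin (n+1)))) (fun i => c i = 0)
    simp only [Finset.card_univ, Fintype.card_fin] at this
    rw [hammingNorm]
    rw [add_comm]; exact this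
  have hzero : ∀ c : Fin (n+1) → F, (Finset.univ.filter (fun i => c i = 0)).card
      = (Finset.univ.filter (fun i : Fin n => c (Fin.castSucc i) = 0)).card
        + if c (Fin.last n) = 0 then 1 else 0 := by
    intro c
    rw [Finset.card_filter, Fin.sum_univ_castSucc, Finset.card_filter]
  have hmin : ∀ p ∈ degreeLT F k, p ≠ 0 → n + 1 - k + 1 ≤ hammingNorm (φ p) := by
    intro p hp hp0
    rw [mem_degreeLT] at hp
    have hnd : p.natDegree < k := (natDegree_lt_iff_degree_lt hp0).2 hp
    have h1 := hwt (φ p)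
    rw [hzero] at h1
    have h2 : (Finset.univ.filter (fun i : Fin n => φ p (Fin.castSucc i) = 0)).card ≤ p.natDegree := by
      calc _ ≤ p.roots.toFinset.card := by
            apply Finset.card_le_card_of_injOn a
            · intro i hi
              simp only [hφc, Finset.coe_filter, Set.mem_ofPred_eq, mul_eq_zero, hv0, false_or,
                Finset.mem_univ, true_and] at hi
              simpa [hp0] using hi
            · exact ha.injOn
        _ ≤ _ := (Multiset.toFinset_card_le _).trans (card_roots' p)
    by_cases h3 : φ p (Fin.last n) = 0
    · rw [if_pos h3] at h1
      rw [hφl] at h3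
      have h4 : p.coeff (k - 1) = 0 := by simpa [hw0] using h3
      have : p.natDegree ≠ k - 1 := by
        intro h
        rw [← h] at h4
        exact hp0 (leadingCoeff_eq_zero.1 h4)
      omega
    · rw [if_neg h3] at h1
      omega
  let ψ : degreeLT F k →ₗ[F] (Fin (n + 1) → F) := φ.comp (degreeLT F k).subtype
  have hinj : Function.Injective ψ := by
    rw [injective_iff_map_eq_zero]
    intro p hp
    by_contra h
    have := hmin p.1 p.2 (by simpa using h)
    have h2 : φ p.1 = 0 := hp
    rw [h2, hammingNorm_zero] at this
    omega
  refine ⟨LinearMap.range ψ, ?_, ?_, ?_, ?_⟩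
  · rw [LinearMap.finrank_range_of_inj hinj, (degreeLTEquiv F k).finrank_eq]
    simp
  · rintro _ ⟨p, rfl⟩ _ ⟨g, rfl⟩
    show ∑ i, φ p.1 i * φ g.1 i = 0
    obtain ⟨p, hp⟩ := p
    obtain ⟨g, hg⟩ := g
    simp only
    rw [Fin.sum_univ_castSucc]
    simp only [hφc, hφl]
    have hpk : p.natDegree ≤ k - 1 := by
      by_cases h : p = 0
      · simp [h]
      · have := (natDegree_lt_iff_degree_lt h).2 (mem_degreeLT.1 hp); omega
    have hgk : g.natDegree ≤ k - 1 := by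
      by_cases h : g = 0
      · simp [h]
      · have := (natDegree_lt_iff_degree_lt h).2 (mem_degreeLT.1 hg); omega
    have hn : 0 < n := by omega
    have hPd : (p * g * X ^ (n + 1 - 2 * k)).degree < ((Finset.univ : Finset (Fin n)).card : WithBot ℕ) := by
      rw [Finset.card_univ, Fintype.card_fin]
      refine lt_of_le_of_lt degree_le_natDegree ?_
      have h1 := natDegree_mul_le (p := p * g) (q := X ^ (n + 1 - 2 * k))
      have h2 := natDegree_mul_le (p := p) (q := g)
      rw [natDegree_X_pow] at h1
      exact_mod_cast (show (p * g * X ^ (n + 1 - 2 * k)).natDegree < n by omega)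
    have hco := Lagrange.coeff_eq_sum (s := (Finset.univ : Finset (Fin n))) (v := a) ha.injOn hPd
    rw [Finset.card_univ, Fintype.card_fin] at hco
    have e1 : n - 1 = (k - 1 + (k - 1)) + (n + 1 - 2 * k) := by omega
    rw [e1, coeff_mul_X_pow, coeff_mul_add_eq_of_natDegree_le hpk hgk] at hco
    have e2 : ∀ i, v i * eval (a i) p * (v i * eval (a i) g) =
      eval (a i) (p * g * X ^ (n + 1 - 2 * k)) / ∏ j ∈ Finset.univ.erase i, (a i - a j) := by
      intro i
      have : v i * eval (a i) p * (v i * eval (a i) g) = (v i * v i) * (eval (a i) p * eval (a i) g) := by ring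
      rw [this, hv]
      simp only [eval_mul, eval_pow, eval_X]
      ring
    rw [Finset.sum_congr rfl (fun i _ => e2 i), ← hco]
    linear_combination (- p.coeff (k-1) * g.coeff (k-1)) * hw
  · rintro _ ⟨p, rfl⟩ hp0
    exact hmin p.1 p.2 (by rintro h; apply hp0; show φ p.1 = 0; rw [h, map_zero])
  · let T : Finset (Fin n) := Finset.univ.filter (fun i => i.1 < k - 1)
    have hT : T.card = k - 1 := by
      simp only [T]
      rw [Fin.card_filter_val_lt]
      omega
    let p := Lagrange.nodal T a
    have hpd : p.natDegree = k - 1 := by rw [Lagrange.natDegree_nodal, hT]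
    have hp0 : p ≠ 0 := Lagrange.nodal_ne_zero
    have hp : p ∈ degreeLT F k := by
      rw [mem_degreeLT, ← natDegree_lt_iff_degree_lt hp0]; omega
    have h1 := hmin p hp hp0
    refine ⟨φ p, ⟨⟨p, hp⟩, rfl⟩, ?_, ?_⟩
    · intro h
      rw [h, hammingNorm_zero] at h1
      omega
    · have h2 := hwt (φ p)
      rw [hzero] at h2
      have h3 : T.card ≤ (Finset.univ.filter (fun i : Fin n => φ p (Fin.castSucc i) = 0)).card := by
        apply Finset.card_le_card
        intro i hi
        simp only [Finset.mem_filter, Finset.mem_univ, true_and, hφc]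
        rw [Lagrange.eval_nodal_at_node hi, mul_zero]
      omega

open Polynomial in
theorem aux_fiber {F : Type*} [Field F] [Fintype F] [DecidableEq F] {f : ℕ} {ζ : F}
    (hζ : IsPrimitiveRoot ζ f) (hf : 0 < f) (c : F) (hc : c ≠ 0) (h : ∃ α, α ^ f = c) :
    Lagrange.nodal (Finset.univ.filter (fun x : F => x ^ f = c)) id = X ^ f - C c ∧
    (Finset.univ.filter (fun x : F => x ^ f = c)).card = f := by
  classical
  have hset : Finset.univ.filter (fun x : F => x ^ f = c) = (nthRoots f c).toFinset := by
    ext x; simp [mem_nthRoots hf]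
  have hnd := hζ.nthRoots_nodup hc
  have hcard : (nthRoots f c).card = f := by rw [hζ.card_nthRoots, if_pos h]
  constructor
  · obtain ⟨α, hα⟩ := h
    have := (X_pow_sub_C_splits_of_isPrimitiveRoot hζ hα).eq_prod_roots_of_monic
      (monic_X_pow_sub_C c hf.ne')
    rw [hset, this, Lagrange.nodal, Finset.prod, Multiset.toFinset_val, hnd.dedup]
    rfl
  · rw [hset, Multiset.toFinset_card_of_nodup hnd, hcard]

open Polynomial in
theorem aux_fibers {F : Type*} [Field F] [Fintype F] [DecidableEq F] {f : ℕ} {ζ : F}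
    (hζ : IsPrimitiveRoot ζ f) (hf : 0 < f) (T : Finset F)
    (hT : ∀ c ∈ T, c ≠ 0 ∧ ∃ α, α ^ f = c) :
    Lagrange.nodal (Finset.univ.filter (fun x : F => x ^ f ∈ T)) id
      = (Lagrange.nodal T id).comp (X ^ f) ∧
    (Finset.univ.filter (fun x : F => x ^ f ∈ T)).card = T.card * f := by
  classical
  have hmaps : ∀ x ∈ Finset.univ.filter (fun x : F => x ^ f ∈ T), x ^ f ∈ T := by simp
  have hfil : ∀ c ∈ T, (Finset.univ.filter (fun x : F => x ^ f ∈ T)).filter (fun x => x ^ f = c)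
      = Finset.univ.filter (fun x : F => x ^ f = c) := by
    intro c hc
    ext x
    simp only [Finset.mem_filter, Finset.mem_univ, true_and]
    exact ⟨fun h => h.2, fun h => ⟨h ▸ hc, h⟩⟩
  constructor
  · rw [Lagrange.nodal, ← Finset.prod_fiberwise_of_maps_to hmaps, Lagrange.nodal, Polynomial.prod_comp]
    refine Finset.prod_congr rfl fun c hc => ?_
    rw [hfil c hc]
    have := (aux_fiber hζ hf c (hT c hc).1 (hT c hc).2).1
    rw [Lagrange.nodal] at this
    rw [this]
    simp
  · rw [Finset.card_eq_sum_card_fiberwise hmaps]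
    rw [Finset.sum_congr rfl (fun c hc => by rw [hfil c hc, (aux_fiber hζ hf c (hT c hc).1 (hT c hc).2).2])]
    simp

/-- derivative of the nodal polynomial on fibers -/
theorem aux_deriv {F : Type*} [Field F] [Fintype F] [DecidableEq F] {f : ℕ} {ζ : F}
    (hζ : IsPrimitiveRoot ζ f) (hf : 0 < f) (T : Finset F)
    (hT : ∀ c ∈ T, c ≠ 0 ∧ ∃ α, α ^ f = c) (x : F) (hx : x ^ f ∈ T) :
    ∏ y ∈ (Finset.univ.filter (fun x : F => x ^ f ∈ T)).erase x, (x - y)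
      = (∏ c ∈ T.erase (x ^ f), (x ^ f - c)) * (f * x ^ (f - 1)) := by
  have h := (aux_fibers hζ hf T hT).1
  have h1 := Lagrange.eval_nodal_derivative_eval_node_eq (v := (id : F → F))
    (s := Finset.univ.filter (fun x : F => x ^ f ∈ T)) (i := x) (by simpa using hx)
  have h2 := Lagrange.eval_nodal_derivative_eval_node_eq (v := (id : F → F))
    (s := T) (i := x ^ f) hx
  rw [h, Polynomial.derivative_comp, Lagrange.eval_nodal] at h1
  rw [Lagrange.eval_nodal] at h2
  simp only [id, Polynomial.eval_mul, Polynomial.eval_comp, Polynomial.derivative_X_pow,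
    Polynomial.eval_pow, Polynomial.eval_X, Polynomial.eval_C] at h1 h2
  rw [← h1, ← h2]
  simp [mul_comm]

theorem aux_eval {F : Type*} [Field F] [Fintype F] [DecidableEq F] {f : ℕ} {ζ : F}
    (hζ : IsPrimitiveRoot ζ f) (hf : 0 < f) (T : Finset F)
    (hT : ∀ c ∈ T, c ≠ 0 ∧ ∃ α, α ^ f = c) (x : F) :
    ∏ y ∈ (Finset.univ.filter (fun x : F => x ^ f ∈ T)), (x - y)
      = ∏ c ∈ T, (x ^ f - c) := by
  have h := congrArg (Polynomial.eval x) (aux_fibers hζ hf T hT).1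
  rw [Polynomial.eval_comp, Lagrange.eval_nodal, Lagrange.eval_nodal] at h
  simpa using h

/-- Theorem 5.2(3): if `(r+1)/2·(t·e₁/e₂ + t)` and `(t−1)(r+1)/2` are even and
`n₁ = s·f₁ + t·f₂` is odd, then for `1 ≤ k ≤ (n₁+1)/2 − 1` there is a `q`-ary `[n₁+1, k]`
MDS self-orthogonal code, where `q = r²`. -/
theorem mds_self_orthogonal_thm5_odd_length_succ
    (r e1 f1 e2 f2 s t l : ℕ)
    (hr_odd : Odd r) (hr_pp : IsPrimePow r)
    (hq1 : r ^ 2 - 1 = e1 * f1) (hq2 : r ^ 2 - 1 = e2 * f2)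
    (hl : 2 ≤ l) (he1 : e1 % 2 ^ (l + 1) = 2 ^ l) (he2 : 2 ^ l ∣ e2)
    (hdvd1 : 2 * e2 ∣ e1 * (r + 1)) (hdvd2 : e1 ∣ e2 * (r - 1))
    (hs1 : 1 ≤ s) (hs2 : s ≤ e1 / Nat.gcd e1 e2)
    (ht1 : 1 ≤ t) (ht2 : t ≤ e2 / Nat.gcd e1 e2)
    (heven1 : Even (t * e1 * (r + 1) / (2 * e2) + t * (r + 1) / 2))
    (heven2 : Even ((t - 1) * (r + 1) / 2))
    (hn1 : Odd (s * f1 + t * f2))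
    (F : Type*) [Field F] [Fintype F] [DecidableEq F]
    (hF : Fintype.card F = r ^ 2) :
    ∀ k : ℕ, 1 ≤ k → k ≤ (s * f1 + t * f2 + 1) / 2 - 1 →
      ∃ C : Submodule F (Fin (s * f1 + t * f2 + 1) → F),
        Module.finrank F C = k ∧
        C ≤ dualCode C ∧
        IsMinDist C (s * f1 + t * f2 + 1 - k + 1) := by
  intro k hk hkn
  classical
  -- arithmetic
  obtain ⟨h, hh⟩ : ∃ h, r + 1 = 2 * h := by
    obtain ⟨m, hm⟩ := hr_odd; exact ⟨m + 1, by omega⟩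
  have hr1 : 1 < r := hr_pp.one_lt
  have hqf : r ^ 2 - 1 = (r - 1) * (r + 1) := by
    have := Nat.sq_sub_sq r 1
    rw [one_pow] at this
    rw [this, mul_comm]
  obtain ⟨M, hM⟩ : ∃ M, M = (r - 1) * h := ⟨_, rfl⟩
  have hqM : r ^ 2 - 1 = 2 * M := by rw [hqf, hh, hM]; ring
  have hq0 : 0 < r ^ 2 - 1 := by
    rw [hqf]; exact Nat.mul_pos (by omega) (by omega)
  have he1p : 0 < e1 := Nat.pos_of_ne_zero (by rintro rfl; omega)
  have he2p : 0 < e2 := Nat.pos_of_ne_zero (by rintro rfl; omega)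
  have hf1p : 0 < f1 := Nat.pos_of_ne_zero (by rintro rfl; omega)
  have hf2p : 0 < f2 := Nat.pos_of_ne_zero (by rintro rfl; omega)
  obtain ⟨G, hG⟩ : ∃ G, G = Nat.gcd e1 e2 := ⟨_, rfl⟩
  have hGp : 0 < G := hG ▸ Nat.gcd_pos_of_pos_left _ he1p
  obtain ⟨D1, hD1⟩ : ∃ D, D = e1 / Nat.gcd e1 e2 := ⟨_, rfl⟩
  obtain ⟨D2, hD2⟩ : ∃ D, D = e2 / Nat.gcd e1 e2 := ⟨_, rfl⟩
  have hcop : Nat.Coprime D1 D2 := by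
    rw [hD1, hD2]; exact Nat.coprime_div_gcd_div_gcd (hG ▸ hGp)
  rw [← hD1] at hs2
  rw [← hD2] at ht2
  have he1G : e1 = D1 * G := by
    rw [hD1, hG, Nat.div_mul_cancel (Nat.gcd_dvd_left _ _)]
  have he2G : e2 = D2 * G := by
    rw [hD2, hG, Nat.div_mul_cancel (Nat.gcd_dvd_right _ _)]
  have hle1 : 2 ^ l ∣ e1 := by
    rw [← Nat.div_add_mod e1 (2 ^ (l + 1)), he1]
    exact Dvd.dvd.add (Dvd.dvd.mul_right (pow_dvd_pow 2 (by omega)) _) dvd_rfl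
  have hlG : 2 ^ l ∣ G := hG ▸ Nat.dvd_gcd hle1 he2
  have h4 : 4 ∣ 2 ^ l := pow_dvd_pow 2 hl
  obtain ⟨b', hb'⟩ := h4.trans hle1
  obtain ⟨b, hb⟩ : ∃ b, b = 2 * b' := ⟨_, rfl⟩
  have hbe : e1 = 2 * b := by omega
  obtain ⟨G', hG'⟩ : 2 ∣ G := (show 2 ∣ 4 by norm_num).trans (h4.trans hlG)
  have hGb : ¬ G ∣ b := by
    intro hd
    have h1 : 2 ^ (l + 1) ∣ e1 := by
      rw [hbe, pow_succ, mul_comm]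
      exact mul_dvd_mul_left 2 (hlG.trans hd)
    have h2 := Nat.mod_eq_zero_of_dvd h1
    rw [he1] at h2
    have : 0 < 2 ^ l := by positivity
    omega
  obtain ⟨N, hN1⟩ : ∃ N, N = D1 * f1 := ⟨_, rfl⟩
  have hNG : r ^ 2 - 1 = G * N := by rw [hq1, he1G, hN1]; ring
  have hN2 : N = D2 * f2 := by
    have : G * N = G * (D2 * f2) := by rw [← hNG, hq2, he2G]; ring
    exact Nat.eq_of_mul_eq_mul_left hGp this
  have hMN : M = G' * N := by
    have : 2 * M = 2 * (G' * N) := by rw [← hqM, hNG, hG']; ring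
    omega
  have hNp : 0 < N := Nat.pos_of_ne_zero (by rintro rfl; omega)
  have hD1p : 0 < D1 := Nat.pos_of_ne_zero (by rintro rfl; omega)
  have hD2p : 0 < D2 := Nat.pos_of_ne_zero (by rintro rfl; omega)
  have hD2h : D2 ∣ h := by
    have h1 : e2 ∣ e1 * h := by
      have : 2 * e2 ∣ 2 * (e1 * h) := by
        rw [show 2 * (e1 * h) = e1 * (r + 1) by rw [hh]; ring]; exact hdvd1
      exact Nat.dvd_of_mul_dvd_mul_left (by norm_num) this
    have h2 : G * D2 ∣ G * (D1 * h) := by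
      rw [show G * D2 = e2 by rw [he2G]; ring, show G * (D1 * h) = e1 * h by rw [he1G]; ring]
      exact h1
    exact hcop.symm.dvd_of_dvd_mul_left (Nat.dvd_of_mul_dvd_mul_left hGp h2)
  have hD1r : D1 ∣ r - 1 := by
    have h2 : G * D1 ∣ G * (D2 * (r - 1)) := by
      rw [show G * D1 = e1 by rw [he1G]; ring,
        show G * (D2 * (r - 1)) = e2 * (r - 1) by rw [he2G]; ring]
      exact hdvd2
    exact hcop.dvd_of_dvd_mul_left (Nat.dvd_of_mul_dvd_mul_left hGp h2)
  obtain ⟨E, hE⟩ := hdvd1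
  have hbE : b * f2 * h = M * E := by
    have : 4 * (b * f2 * h) = 4 * (M * E) := by
      calc 4 * (b * f2 * h) = (2 * b) * (2 * h) * f2 := by ring
        _ = e1 * (r + 1) * f2 := by rw [← hbe, ← hh]
        _ = 2 * (e2 * f2) * E := by rw [hE]; ring
        _ = 4 * (M * E) := by rw [← hq2, hqM]; ring
    omega
  have hev1 : Even (t * (E + h)) := by
    have h1 : t * e1 * (r + 1) / (2 * e2) = t * E := by
      rw [show t * e1 * (r + 1) = (t * E) * (2 * e2) by rw [mul_assoc, hE]; ring]
      exact Nat.mul_div_cancel _ (by omega)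
    have h2 : t * (r + 1) / 2 = t * h := by
      rw [hh, show t * (2 * h) = (t * h) * 2 by ring]
      exact Nat.mul_div_cancel _ (by norm_num)
    rw [h1, h2, ← mul_add] at heven1
    exact heven1
  have hev2 : Even ((t - 1) * h) := by
    have h2 : (t - 1) * (r + 1) / 2 = (t - 1) * h := by
      rw [hh, show (t - 1) * (2 * h) = ((t - 1) * h) * 2 by ring]
      exact Nat.mul_div_cancel _ (by norm_num)
    rw [h2] at heven2
    exact heven2
  -- the field
  have hsub : ∀ x y : F, (x - y) ^ r = x ^ r - y ^ r := by
    obtain ⟨p, m, hp, hm, rfl⟩ := hr_pp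
    have hp' := hp.nat_prime
    haveI : Fact p.Prime := ⟨hp'⟩
    haveI : CharP F p := charP_of_card_eq_prime_pow (f := m * 2) (by
      rw [hF, pow_mul])
    intro x y
    exact sub_pow_char_pow ..
  have hpowq : ∀ x : F, x ≠ 0 → x ^ (r ^ 2 - 1) = 1 := by
    intro x hx
    rw [← hF]; exact FiniteField.pow_card_sub_one_eq_one x hx
  have hcard2 : Fintype.card F / 2 = M := by rw [hF]; omega
  have hchar : ringChar F ≠ 2 := by
    intro hc
    have := FiniteField.even_card_of_char_two hc
    rw [hF] at this
    omega
  have hS : ∀ x : F, x ≠ 0 → x ^ M = 1 → IsSquare x := by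
    intro x hx h1
    rw [FiniteField.isSquare_iff hchar hx, hcard2]; exact h1
  have hSr : ∀ x : F, x ^ r = x → IsSquare x := by
    intro x hx
    by_cases h0 : x = 0
    · rw [h0]; exact IsSquare.zero
    apply hS x h0
    have : x ^ (r - 1) = 1 := by
      have h1 : x ^ (r - 1) * x = 1 * x := by
        rw [← pow_succ, Nat.sub_add_cancel hr1.le, hx, one_mul]
      exact mul_right_cancel₀ h0 h1
    rw [hM, pow_mul, this, one_pow]
  have hcast : ∀ m : ℕ, IsSquare (m : F) := by
    intro m
    apply hSr
    induction m with
    | zero => simp; omega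
    | succ m ih =>
      have := hsub ((m : F) + 1) 1
      rw [add_sub_cancel_right, ih, one_pow] at this
      push_cast
      linear_combination -this
  have hm1 : IsSquare (-1 : F) := by
    apply hSr
    exact hr_odd.neg_one_pow
  obtain ⟨ω, hω⟩ : ∃ ω : F, IsPrimitiveRoot ω (r ^ 2 - 1) := by
    obtain ⟨g, hg⟩ := IsCyclic.exists_ofOrder_eq_natCard (α := Fˣ)
    refine ⟨(g : F), ?_⟩
    have h1 : Nat.card Fˣ = r ^ 2 - 1 := by
      rw [Nat.card_eq_fintype_card, Fintype.card_units, hF]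
    rw [h1] at hg
    rw [IsPrimitiveRoot.coe_units_iff, ← hg]
    exact IsPrimitiveRoot.orderOf g
  have hω0 : ω ≠ 0 := hω.ne_zero hq0.ne'
  have hωM : ω ^ M = -1 :=
    (hω.pow hq0 (a := M) (b := 2) (by rw [hqM, mul_comm])).eq_neg_one_of_two_right
  have hζ1 : IsPrimitiveRoot (ω ^ e1) f1 := hω.pow hq0 hq1
  have hζ2 : IsPrimitiveRoot (ω ^ e2) f2 := hω.pow hq0 hq2
  have hμ1 : IsPrimitiveRoot (ω ^ (G * f1)) D1 := hω.pow hq0 (by rw [hNG, hN1]; ring)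
  have hμ2 : IsPrimitiveRoot (ω ^ (G * f2)) D2 := hω.pow hq0 (by rw [hNG, hN2]; ring)
  obtain ⟨T1, hT1s, hT1c⟩ := Finset.exists_subset_card_eq
    (s := Polynomial.nthRootsFinset D1 (1 : F)) (n := s) (by rw [hμ1.card_nthRootsFinset]; exact hs2)
  obtain ⟨T2', hT2s, hT2c'⟩ := Finset.exists_subset_card_eq
    (s := Polynomial.nthRootsFinset D2 (1 : F)) (n := t) (by rw [hμ2.card_nthRootsFinset]; exact ht2)
  have hT1 : ∀ c ∈ T1, c ^ D1 = 1 := fun c hc =>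
    (Polynomial.mem_nthRootsFinset hD1p _).1 (hT1s hc)
  have hT2' : ∀ c ∈ T2', c ^ D2 = 1 := fun c hc =>
    (Polynomial.mem_nthRootsFinset hD2p _).1 (hT2s hc)
  obtain ⟨T2, hT2def⟩ : ∃ T2, T2 = T2'.image (fun u => ω ^ (b * f2) * u) := ⟨_, rfl⟩
  have hT2c : T2.card = t := by
    rw [hT2def, Finset.card_image_of_injective _ (mul_right_injective₀ (pow_ne_zero _ hω0)), hT2c']
  have hT2 : ∀ d ∈ T2, ∃ u, u ^ D2 = 1 ∧ d = ω ^ (b * f2) * u := by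
    intro d hd
    rw [hT2def, Finset.mem_image] at hd
    obtain ⟨u, hu, rfl⟩ := hd
    exact ⟨u, hT2' u hu, rfl⟩
  have hok1 : ∀ c ∈ T1, c ≠ 0 ∧ ∃ α, α ^ f1 = c := by
    intro c hc
    haveI : NeZero D1 := ⟨hD1p.ne'⟩
    obtain ⟨i, -, hi⟩ := hμ1.eq_pow_of_pow_eq_one (hT1 c hc)
    refine ⟨?_, ω ^ (G * i), ?_⟩
    · rw [← hi]; exact pow_ne_zero _ (pow_ne_zero _ hω0)
    · rw [← hi, ← pow_mul, ← pow_mul]; congr 1; ring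
  have hok2 : ∀ c ∈ T2, c ≠ 0 ∧ ∃ α, α ^ f2 = c := by
    intro c hc
    obtain ⟨u, hu, rfl⟩ := hT2 c hc
    haveI : NeZero D2 := ⟨hD2p.ne'⟩
    obtain ⟨i, -, hi⟩ := hμ2.eq_pow_of_pow_eq_one hu
    refine ⟨?_, ω ^ (b + G * i), ?_⟩
    · rw [← hi]; exact mul_ne_zero (pow_ne_zero _ hω0) (pow_ne_zero _ (pow_ne_zero _ hω0))
    · rw [← hi, ← pow_mul, ← pow_mul, ← pow_add]; congr 1; ring
  obtain ⟨A, hA⟩ : ∃ A, A = Finset.univ.filter (fun x : F => x ^ f1 ∈ T1) := ⟨_, rfl⟩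
  obtain ⟨B, hB⟩ : ∃ B, B = Finset.univ.filter (fun x : F => x ^ f2 ∈ T2) := ⟨_, rfl⟩
  have hAm : ∀ x ∈ A, x ^ f1 ∈ T1 := by simp [hA]
  have hBm : ∀ x ∈ B, x ^ f2 ∈ T2 := by simp [hB]
  have hAN : ∀ x ∈ A, x ^ N = 1 := by
    intro x hx
    rw [hN1, mul_comm, pow_mul]; exact hT1 _ (hAm x hx)
  have hBN : ∀ x ∈ B, x ^ N = ω ^ (b * N) := by
    intro x hx
    obtain ⟨u, hu, hxu⟩ := hT2 _ (hBm x hx)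
    rw [hN2, mul_comm, pow_mul, hxu, mul_pow, hu, mul_one, ← pow_mul, mul_assoc]
  have hdisj : Disjoint A B := by
    rw [Finset.disjoint_left]
    intro x hxA hxB
    have h1 := hBN x hxB
    rw [hAN x hxA] at h1
    have h2 := (hω.pow_eq_one_iff_dvd _).1 h1.symm
    rw [hNG] at h2
    exact hGb (Nat.dvd_of_mul_dvd_mul_right hNp h2)
  have hA0 : ∀ x ∈ A, x ≠ 0 := by
    rintro x hx rfl
    have := hAN _ hx
    rw [zero_pow hNp.ne'] at this
    exact zero_ne_one this
  have hB0 : ∀ x ∈ B, x ≠ 0 := by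
    rintro x hx rfl
    have := hBN _ hx
    rw [zero_pow hNp.ne'] at this
    exact pow_ne_zero _ hω0 this.symm
  have hAsq : ∀ x ∈ A, IsSquare x := by
    intro x hx
    apply hS x (hA0 x hx)
    rw [hMN, mul_comm, pow_mul, hAN x hx, one_pow]
  have hBsq : ∀ x ∈ B, IsSquare x := by
    intro x hx
    apply hS x (hB0 x hx)
    rw [hMN, mul_comm, pow_mul, hBN x hx, ← pow_mul, hb,
      show 2 * b' * N * G' = (G' * N) * 2 * b' by ring, ← hMN, mul_comm M 2, ← hqM,
      pow_mul, hω.pow_eq_one, one_pow]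
  -- elements of norm one
  have hU : ∀ y z : F, y ^ (r + 1) = 1 → z ^ (r + 1) = 1 → y ≠ z →
      (y - z) ^ M * (y ^ h * z ^ h) = (-1) ^ h := by
    intro y z hy hz hyz
    have h0 : y - z ≠ 0 := sub_ne_zero.2 hyz
    have h1 : (y - z) ^ (r - 1) * (y * z) = -1 := by
      apply mul_right_cancel₀ h0
      have h2 : (y - z) ^ (r - 1) * (y - z) = y ^ r - z ^ r := by
        rw [← hsub, ← pow_succ, Nat.sub_add_cancel hr1.le]
      rw [pow_succ] at hy hz
      linear_combination (y * z) * h2 + z * hy - y * hz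
    rw [← mul_pow, hM, pow_mul, ← mul_pow, h1]
  have huh : ∀ u : F, u ^ D2 = 1 → u ^ h = 1 := by
    intro u hu
    obtain ⟨m, hm⟩ := hD2h
    rw [hm, pow_mul, hu, one_pow]
  have hdh : ∀ d ∈ T2, d ^ h = (-1) ^ E := by
    intro d hd
    obtain ⟨u, hu, rfl⟩ := hT2 d hd
    rw [mul_pow, huh u hu, mul_one, ← pow_mul, hbE, pow_mul, hωM]
  have hsqE : ((-1 : F) ^ E) * (-1) ^ E = 1 := by
    rw [← mul_pow]; simp
  have hd1 : ∀ d ∈ T2, d ^ (r + 1) = 1 := by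
    intro d hd
    rw [hh, mul_comm, pow_mul, hdh d hd, sq, hsqE]
  have hAd : ∀ x ∈ A, IsSquare (∏ y ∈ (A ∪ B).erase x, (x - y)) := by
    intro x hx
    have hxB : x ∉ B := Finset.disjoint_left.1 hdisj hx
    rw [Finset.erase_union_distrib, Finset.erase_eq_of_notMem hxB, Finset.prod_union
      (hdisj.mono_left (Finset.erase_subset _ _)), hA, hB,
      aux_deriv hζ1 hf1p T1 hok1 x (hAm x hx), aux_eval hζ2 hf2p T2 hok2]
    have hcr : ∀ c ∈ T1, c ^ r = c := by
      intro c hc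
      obtain ⟨m, hm⟩ := hD1r
      have : c ^ (r - 1) = 1 := by rw [hm, pow_mul, hT1 c hc, one_pow]
      rw [← Nat.sub_add_cancel hr1.le, pow_succ, this, one_mul]
    refine IsSquare.mul (IsSquare.mul ?_ ((hcast f1).mul ((hAsq x hx).pow _))) ?_
    · apply Finset.isSquare_prod
      intro c hc
      apply hSr
      rw [hsub, hcr c (Finset.mem_of_mem_erase hc), hcr _ (hAm x hx)]
    · have hu : (x ^ f2) ^ D2 = 1 := by
        rw [← pow_mul, mul_comm, ← hN2, hAN x hx]
      have hne : ∀ d ∈ T2, x ^ f2 ≠ d := by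
        intro d hd hxd
        apply hxB
        rw [hB]; simp [hxd, hd]
      apply hS
      · rw [Finset.prod_ne_zero_iff]
        intro d hd
        exact sub_ne_zero.2 (hne d hd)
      · rw [← Finset.prod_pow]
        have hterm : ∀ d ∈ T2, (x ^ f2 - d) ^ M = (-1) ^ (E + h) := by
          intro d hd
          have h1 := hU (x ^ f2) d (by rw [hh, mul_comm, pow_mul, huh _ hu, one_pow]) (hd1 d hd)
            (hne d hd)
          rw [huh _ hu, hdh d hd, one_mul] at h1
          rw [pow_add, ← h1]
          linear_combination (-(x ^ f2 - d) ^ M) * hsqE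
        rw [Finset.prod_congr rfl hterm, Finset.prod_const, hT2c, ← pow_mul, mul_comm]
        exact hev1.neg_one_pow
  have hBd : ∀ x ∈ B, IsSquare (∏ y ∈ (A ∪ B).erase x, (x - y)) := by
    intro x hx
    have hxA : x ∉ A := Finset.disjoint_right.1 hdisj hx
    rw [Finset.erase_union_distrib, Finset.erase_eq_of_notMem hxA, Finset.prod_union
      (hdisj.mono_right (Finset.erase_subset _ _)), hA, hB,
      aux_deriv hζ2 hf2p T2 hok2 x (hBm x hx), aux_eval hζ1 hf1p T1 hok1]
    have hcr : ∀ c : F, c ^ (r - 1) = 1 → c ^ r = c := by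
      intro c this
      rw [← Nat.sub_add_cancel hr1.le, pow_succ, this, one_mul]
    obtain ⟨m, hm⟩ := hD1r
    refine IsSquare.mul ?_ (IsSquare.mul ?_ ((hcast f2).mul ((hBsq x hx).pow _)))
    · apply Finset.isSquare_prod
      intro c hc
      apply hSr
      rw [hsub, hcr c (by rw [hm, pow_mul, hT1 c hc, one_pow]), hcr (x ^ f1)]
      rw [hm, ← pow_mul, show f1 * (D1 * m) = N * m by rw [hN1]; ring, pow_mul, hBN x hx,
        ← pow_mul]
      rw [show b * N * m = b * f1 * (r - 1) by rw [hm, hN1]; ring]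
      rw [show r - 1 = 2 * (h - 1) by omega, show b * f1 * (2 * (h - 1)) = (2 * b) * f1 * (h - 1) by ring,
        ← hbe, ← hq1, pow_mul, hω.pow_eq_one, one_pow]
    · apply hS
      · rw [Finset.prod_ne_zero_iff]
        intro d hd
        exact sub_ne_zero.2 (Finset.mem_erase.1 hd).1.symm
      · rw [← Finset.prod_pow]
        have hterm : ∀ d ∈ T2.erase (x ^ f2), (x ^ f2 - d) ^ M = (-1) ^ h := by
          intro d hd
          have hd2 := Finset.mem_of_mem_erase hd
          have h1 := hU (x ^ f2) d (hd1 _ (hBm x hx)) (hd1 d hd2)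
            (Finset.mem_erase.1 hd).1.symm
          rw [hdh _ (hBm x hx), hdh d hd2, hsqE, mul_one] at h1
          exact h1
        rw [Finset.prod_congr rfl hterm, Finset.prod_const, Finset.card_erase_of_mem (hBm x hx),
          hT2c, ← pow_mul, mul_comm]
        exact hev2.neg_one_pow
  have hcardS : (A ∪ B).card = s * f1 + t * f2 := by
    rw [Finset.card_union_of_disjoint hdisj, hA, hB, (aux_fibers hζ1 hf1p T1 hok1).2,
      (aux_fibers hζ2 hf2p T2 hok2).2, hT1c, hT2c]
  let e : Fin (s * f1 + t * f2) ≃ (A ∪ B : Finset F) := ((A ∪ B).equivFinOfCardEq hcardS).symm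
  have hinj : Function.Injective (fun i => (e i : F)) :=
    Subtype.val_injective.comp e.injective
  refine aux_code (fun i => (e i : F)) hinj ?_ ?_ ?_ hm1 hk (by omega)
  · intro i
    rcases Finset.mem_union.1 (e i).2 with hi | hi
    · exact hA0 _ hi
    · exact hB0 _ hi
  · intro i
    rcases Finset.mem_union.1 (e i).2 with hi | hi
    · exact hAsq _ hi
    · exact hBsq _ hi
  · intro i
    have himg : (A ∪ B).erase (e i : F) = (Finset.univ.erase i).image (fun j => (e j : F)) := by
      rw [Finset.image_erase hinj]
      congr 1
      ext x
      simp only [Finset.mem_image, Finset.mem_univ, true_and]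
      constructor
      · intro hx
        exact ⟨e.symm ⟨x, hx⟩, by simp⟩
      · rintro ⟨j, rfl⟩
        exact (e j).2
    have hprod : ∏ j ∈ Finset.univ.erase i, ((e i : F) - (e j : F))
        = ∏ y ∈ (A ∪ B).erase (e i : F), ((e i : F) - y) := by
      rw [himg, Finset.prod_image hinj.injOn]
    show IsSquare (∏ j ∈ Finset.univ.erase i, ((e i : F) - (e j : F)))
    rw [hprod]
    rcases Finset.mem_union.1 (e i).2 with hi | hi
    · exact hAd _ hi
    · exact hBd _ hi
end
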